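/- arXiv:2102.00493 — 2 statements merged into one kernel-verified Lean document; each statement's English description precedes it below -/
import Mathlib

section
/- Almost every real number α ∈ [0,1) (with respect to Lebesgue measure) is absolutely normal, i.e., the set of α ∈ [0,1) that fail to be normal in some integer base r ≥ 2 is a Lebesgue null set. -/
open MeasureTheory Filter Finset

/-- The `j`-th digit (after the radix point) of `α` in base `r`: `⌊r^j * α⌋ mod r`. -/
noncomputable def digit (r : ℕ) (α : ℝ) (j : ℕ) : ℤ := ⌊(r : ℝ) ^ j * α⌋ % r

/-- `digitCount r b n α` counts the indices `j` with `1 ≤ j ≤ n` and `digit r α j = b`. -/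
noncomputable def digitCount (r b n : ℕ) (α : ℝ) : ℕ :=
  ((Finset.Icc 1 n).filter (fun j => digit r α j = (b : ℤ))).card

/-- `α` is simply normal in base `r`. -/
def SimplyNormal (r : ℕ) (α : ℝ) : Prop :=
  ∀ b < r, Tendsto (fun n : ℕ => (digitCount r b n α : ℝ) / n) atTop (nhds (1 / r))

/-- `α` is normal in base `r`: `r^m * α` is simply normal in base `r^n`
for all `n ≥ 1` and all `m ≥ 0`. -/
def NormalBase (r : ℕ) (α : ℝ) : Prop :=
  ∀ n : ℕ, 1 ≤ n → ∀ m : ℕ, SimplyNormal (r ^ n) ((r : ℝ) ^ m * α)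

/-
On the circle `ℝ / ℤ` the digits of `α` in base `R` are the values of the first digit along the
orbit of `α` under `x ↦ R • x`. Rotation by `k / R` preserves Lebesgue measure, leaves `R • x`
unchanged and adds `k` to the first digit modulo `R`; hence the first digit is uniformly distributed
and independent of `R • x`. As `x ↦ R • x` preserves Lebesgue measure, the digits are identically
distributed and pairwise independent, and the strong law of large numbers gives simple normality
almost everywhere. Normality is then a countable intersection of conditions, each pulled back along
a dilation `α ↦ r ^ m * α`, which preserves null sets.
-/

open ProbabilityTheory Function Topology

section BirkhoffAverage

variable {Ω Ω' β γ E : Type*} [MeasurableSpace Ω] [MeasurableSpace Ω'] [MeasurableSpace β]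
  [MeasurableSpace γ] {μ : Measure Ω} {ν : Measure Ω'}

theorem indepFun_comp_of_measurePreserving {φ : Ω → Ω'} {f : Ω' → β} {g : Ω' → γ}
    (hφ : MeasurePreserving φ μ ν) (hf : Measurable f) (hg : Measurable g) (h : f ⟂ᵢ[ν] g) :
    (f ∘ φ) ⟂ᵢ[μ] (g ∘ φ) := by
  rw [indepFun_iff_measure_inter_preimage_eq_mul] at h ⊢
  intro s t hs ht
  simp only [Set.preimage_comp, ← Set.preimage_inter]
  rw [hφ.measure_preimage ((hf hs).inter (hg ht)).nullMeasurableSet,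
    hφ.measure_preimage (hf hs).nullMeasurableSet, hφ.measure_preimage (hg ht).nullMeasurableSet,
    h s t hs ht]

theorem identDistrib_comp_of_measurePreserving {φ : Ω → Ω'} {f : Ω' → β}
    (hφ : MeasurePreserving φ μ ν) (hf : Measurable f) : IdentDistrib (f ∘ φ) f μ ν where
  aemeasurable_fst := (hf.comp hφ.measurable).aemeasurable
  aemeasurable_snd := hf.aemeasurable
  map_eq := by rw [← Measure.map_map hf hφ.measurable, hφ.map_eq]

theorem pairwise_indepFun_comp_iterate {T : Ω → Ω} {f : Ω → β} (hT : MeasurePreserving T μ μ)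
    (hf : Measurable f) (h : f ⟂ᵢ[μ] T) :
    Pairwise ((· ⟂ᵢ[μ] ·) on fun k ↦ f ∘ T^[k]) := by
  have indep_of_lt : ∀ i j, i < j → (f ∘ T^[i]) ⟂ᵢ[μ] (f ∘ T^[j]) := by
    intro i j hij
    obtain ⟨k, rfl⟩ := Nat.exists_eq_add_of_lt hij
    have hfT : Measurable (f ∘ T^[k]) := hf.comp (hT.iterate k).measurable
    have h_split : f ∘ T^[i + k + 1] = ((f ∘ T^[k]) ∘ T) ∘ T^[i] := by
      rw [comp_assoc f, ← iterate_succ, comp_assoc f, ← iterate_add, add_assoc, add_comm i]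
    rw [h_split]
    exact indepFun_comp_of_measurePreserving (hT.iterate i) hf (hfT.comp hT.measurable)
      (h.comp measurable_id hfT)
  intro i j hij
  exact hij.lt_or_gt.elim (indep_of_lt i j) fun hji ↦ (indep_of_lt j i hji).symm

theorem ae_tendsto_birkhoffAverage_of_indepFun [NormedAddCommGroup E] [NormedSpace ℝ E]
    [CompleteSpace E] [MeasurableSpace E] [BorelSpace E] {T : Ω → Ω} {f : Ω → E}
    (hT : MeasurePreserving T μ μ) (hf : Measurable f) (hfi : Integrable f μ) (h : f ⟂ᵢ[μ] T) :
    ∀ᵐ x ∂μ, Tendsto (birkhoffAverage ℝ T f · x) atTop (𝓝 (∫ y, f y ∂μ)) :=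
  strong_law_ae (fun k ↦ f ∘ T^[k]) hfi (pairwise_indepFun_comp_iterate hT hf h)
    fun k ↦ identDistrib_comp_of_measurePreserving (hT.iterate k) hf

end BirkhoffAverage

section Equidistribution

variable {Ω β G : Type*} [MeasurableSpace Ω] [MeasurableSpace β] [AddGroup G] [Finite G]
  [MeasurableSpace G] [MeasurableSingletonClass G] {μ : Measure Ω} {d : Ω → G} {τ : G → Ω → Ω}

theorem card_mul_measure_preimage_of_equivariant (hd : Measurable d)
    (hτ : ∀ g, MeasurePreserving (τ g) μ μ) (hdτ : ∀ g x, d (τ g x) = g + d x) (s : Set G) :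
    Nat.card G * μ (d ⁻¹' s) = s.ncard * μ Set.univ := by
  have := Fintype.ofFinite G
  have hd' (g : G) : MeasurableSet (d ⁻¹' {g}) := hd (measurableSet_singleton g)
  have fiber_eq (g : G) : μ (d ⁻¹' {g}) = μ (d ⁻¹' {0}) := by
    have : τ g ⁻¹' (d ⁻¹' {g}) = d ⁻¹' {0} := by ext x; simp [hdτ]
    rw [← this, (hτ g).measure_preimage (hd' g).nullMeasurableSet]
  have measure_preimage (t : Set G) : μ (d ⁻¹' t) = t.ncard * μ (d ⁻¹' {0}) := by
    have ht := t.toFinite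
    rw [← ht.coe_toFinset, ← sum_measure_preimage_singleton _ fun g _ ↦ hd' g,
      Set.ncard_coe_finset]
    simp [fiber_eq]
  rw [← Set.preimage_univ (f := d), measure_preimage s, measure_preimage Set.univ, Set.ncard_univ]
  ring

theorem indepFun_of_equivariant [IsProbabilityMeasure μ] {T : Ω → β} (hd : Measurable d)
    (hT : Measurable T) (hτ : ∀ g, MeasurePreserving (τ g) μ μ)
    (hdτ : ∀ g x, d (τ g x) = g + d x) (hTτ : ∀ g x, T (τ g x) = T x) : d ⟂ᵢ[μ] T := by
  rw [indepFun_iff_measure_inter_preimage_eq_mul]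
  intro s A hs hA
  have hτA (g : G) : MeasurePreserving (τ g) (μ.restrict (T ⁻¹' A)) (μ.restrict (T ⁻¹' A)) := by
    have h_inv : τ g ⁻¹' (T ⁻¹' A) = T ⁻¹' A := by ext x; simp [hTτ]
    simpa only [h_inv] using (hτ g).restrict_preimage (hT hA)
  have h_joint := card_mul_measure_preimage_of_equivariant hd hτA hdτ s
  have h_marginal := card_mul_measure_preimage_of_equivariant hd hτ hdτ s
  rw [Measure.restrict_apply (hd hs), Measure.restrict_apply_univ] at h_joint
  rw [measure_univ, mul_one] at h_marginal
  have card_ne_zero : (Nat.card G : ENNReal) ≠ 0 := Nat.cast_ne_zero.2 Nat.card_pos.ne'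
  rw [← ENNReal.mul_right_inj card_ne_zero (ENNReal.natCast_ne_top _), h_joint, ← mul_assoc,
    h_marginal]

end Equidistribution

section AddCircle

theorem quasiMeasurePreserving_addCircle_mk (T : ℝ) [hT : Fact (0 < T)] :
    Measure.QuasiMeasurePreserving ((↑) : ℝ → AddCircle T) := by
  refine ⟨AddCircle.measurable_mk', Measure.AbsolutelyContinuous.mk fun s hs hs0 ↦ ?_⟩
  rw [Measure.map_apply AddCircle.measurable_mk' hs, measure_eq_zero_iff_ae_notMem,
    ← Measure.restrict_univ (μ := volume), ← iUnion_Ioc_zsmul hT.out, ae_restrict_iUnion_iff]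
  intro n
  rw [add_zsmul, one_zsmul]
  exact (AddCircle.measurePreserving_mk T (n • T)).quasiMeasurePreserving.ae
    (measure_eq_zero_iff_ae_notMem.1 hs0)

instance : IsProbabilityMeasure (volume : Measure UnitAddCircle) := ⟨UnitAddCircle.measure_univ⟩

theorem measurePreserving_nsmul_addCircle (T : ℝ) [Fact (0 < T)] {n : ℕ} (hn : n ≠ 0) :
    MeasurePreserving fun x : AddCircle T ↦ n • x := by
  simpa only [natCast_zsmul] using
    Measure.measurePreserving_zsmul (volume : Measure (AddCircle T)) (Nat.cast_ne_zero.2 hn)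

end AddCircle

section Digits

variable {R : ℕ}

theorem periodic_floor_natCast_mul_zmod (R : ℕ) :
    Periodic (fun x : ℝ ↦ (⌊R * x⌋ : ZMod R)) 1 := by
  intro x
  simp [mul_add, Int.floor_add_natCast]

/-- The first base-`R` digit of a point of the circle `ℝ / ℤ`. It is a residue modulo `R`, so that
translating the point by `k / R` adds `k` to the digit. -/
noncomputable def circleDigit (R : ℕ) : UnitAddCircle → ZMod R :=
  (periodic_floor_natCast_mul_zmod R).lift

theorem circleDigit_coe (x : ℝ) : circleDigit R x = (⌊R * x⌋ : ZMod R) :=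
  Periodic.lift_coe _ x

theorem measurable_circleDigit : Measurable (circleDigit R) := by
  refine QuotientAddGroup.measurable_from_quotient.2 ?_
  change Measurable fun x : ℝ ↦ ((⌊R * x⌋ : ℤ) : ZMod R)
  fun_prop

theorem circleDigit_toAddCircle_add [NeZero R] (k : ZMod R) (x : UnitAddCircle) :
    circleDigit R (ZMod.toAddCircle k + x) = k + circleDigit R x := by
  obtain ⟨k, rfl⟩ := ZMod.intCast_surjective k
  induction x using QuotientAddGroup.induction_on with | _ x
  rw [ZMod.toAddCircle_intCast, ← QuotientAddGroup.mk_add, circleDigit_coe, circleDigit_coe,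
    mul_add, mul_div_cancel₀ _ (NeZero.ne (R : ℝ)), Int.floor_intCast_add, Int.cast_add]

theorem nsmul_toAddCircle_add [NeZero R] (k : ZMod R) (x : UnitAddCircle) :
    R • (ZMod.toAddCircle k + x) = R • x := by
  rw [nsmul_add, ← map_nsmul]
  simp

theorem indepFun_circleDigit_nsmul [NeZero R] :
    circleDigit R ⟂ᵢ[volume] fun x : UnitAddCircle ↦ R • x :=
  indepFun_of_equivariant measurable_circleDigit
    (measurePreserving_nsmul_addCircle 1 (NeZero.ne R)).measurable
    (fun k ↦ measurePreserving_add_left volume (ZMod.toAddCircle k))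
    circleDigit_toAddCircle_add nsmul_toAddCircle_add

theorem measureReal_circleDigit_preimage_singleton [NeZero R] (k : ZMod R) :
    volume.real (circleDigit R ⁻¹' {k}) = 1 / R := by
  have h := card_mul_measure_preimage_of_equivariant measurable_circleDigit
    (fun k ↦ measurePreserving_add_left volume (ZMod.toAddCircle k))
    circleDigit_toAddCircle_add {k}
  rw [Nat.card_zmod, Set.ncard_singleton, Nat.cast_one, one_mul, measure_univ] at h
  rw [eq_div_iff (NeZero.ne (R : ℝ)), mul_comm, measureReal_def]
  simpa using congrArg ENNReal.toReal h

theorem digit_succ_eq_natCast_iff {b : ℕ} (hb : b < R) (α : ℝ) (j : ℕ) :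
    digit R α (j + 1) = b ↔ circleDigit R (R ^ j • (α : UnitAddCircle)) = b := by
  have : R ^ j • (α : UnitAddCircle) = ((R ^ j * α : ℝ) : UnitAddCircle) := by
    rw [← QuotientAddGroup.mk_nsmul, nsmul_eq_mul, Nat.cast_pow]
  rw [this, circleDigit_coe, ← mul_assoc, ← pow_succ', ← Int.cast_natCast (R := ZMod R) b,
    ZMod.intCast_eq_intCast_iff',
    Int.emod_eq_of_lt (Int.natCast_nonneg b) (Int.ofNat_lt.2 hb), digit]

theorem birkhoffAverage_indicator_circleDigit {b : ℕ} (hb : b < R) (n : ℕ) (α : ℝ) :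
    birkhoffAverage ℝ (R • ·) ((circleDigit R ⁻¹' {(b : ZMod R)}).indicator 1) n
      (α : UnitAddCircle) = (digitCount R b n α : ℝ) / n := by
  classical
  have : digitCount R b n α = ∑ k ∈ range n, if digit R α (k + 1) = b then 1 else 0 := by
    rw [digitCount, card_filter, ← Ico_add_one_right_eq_Icc, sum_Ico_eq_sum_range]
    simp only [add_tsub_cancel_right, add_comm 1]
  rw [this, birkhoffAverage, birkhoffSum, smul_eq_mul, inv_mul_eq_div]
  simp [smul_iterate_apply, Set.indicator_apply, digit_succ_eq_natCast_iff hb]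

end Digits

theorem ae_simplyNormal (R : ℕ) : ∀ᵐ α : ℝ, SimplyNormal R α := by
  simp only [SimplyNormal, ae_all_iff]
  intro b hb
  have : NeZero R := ⟨Nat.ne_zero_of_lt hb⟩
  have hD : MeasurableSet (circleDigit R ⁻¹' {(b : ZMod R)}) :=
    measurable_circleDigit (measurableSet_singleton _)
  have h_indep : (circleDigit R ⁻¹' {(b : ZMod R)}).indicator (1 : UnitAddCircle → ℝ)
      ⟂ᵢ[volume] (R • ·) :=
    indepFun_circleDigit_nsmul.comp (φ := Set.indicator {(b : ZMod R)} (1 : ZMod R → ℝ))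
      measurable_from_top measurable_id
  have h_circle := ae_tendsto_birkhoffAverage_of_indepFun
    (measurePreserving_nsmul_addCircle 1 (NeZero.ne R)) (measurable_one.indicator hD)
    ((integrable_const 1).indicator hD) h_indep
  rw [integral_indicator_one hD, measureReal_circleDigit_preimage_singleton] at h_circle
  filter_upwards [(quasiMeasurePreserving_addCircle_mk 1).ae h_circle] with α hα
  simpa only [birkhoffAverage_indicator_circleDigit hb] using hα

theorem ae_normalBase {r : ℕ} (hr : r ≠ 0) : ∀ᵐ α : ℝ, NormalBase r α := by
  simp only [NormalBase, ae_all_iff]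
  intro n _ m
  have hrm : (r : ℝ) ^ m ≠ 0 := pow_ne_zero m (Nat.cast_ne_zero.2 hr)
  exact (Measure.quasiMeasurePreserving_smul volume hrm).ae (ae_simplyNormal (r ^ n))

theorem almost_all_absolutely_normal_general :
    ∀ᵐ α : ℝ, ∀ r : ℕ, r ≠ 0 → NormalBase r α := by
  simp only [ae_all_iff]
  exact fun r hr ↦ ae_normalBase hr

/-- Almost every number in `Set.Ico 0 1` is absolutely normal. -/
theorem almost_all_absolutely_normal :
    volume {α : ℝ | α ∈ Set.Ico (0 : ℝ) 1 ∧ ∃ r : ℕ, 2 ≤ r ∧ ¬ NormalBase r α} = 0 := by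
  refine measure_mono_null ?_ almost_all_absolutely_normal_general
  rintro α ⟨-, r, hr, h_not_normal⟩ h
  exact h_not_normal (h r (by lia))
end

section
/- Let r ≥ 2 be an integer and b ∈ {0,…,r−1} a digit. The set M_b of all α ∈ [0,1) for which the relative frequency p_{b,n,α,r}/n does not converge to 1/r as n → ∞ is a Lebesgue null set. -/
open MeasureTheory Filter Finset

open ProbabilityTheory

/-! The map `x ↦ (⌊r ^ m * x⌋, fract (r ^ m * x))` sends the uniform distribution on `[0, 1)` to a
product measure whose second factor is again uniform on `[0, 1)`. The first `m` digits of `x` are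
functions of the integer part and the digit `m + 1` is the first digit of the fractional part, so
the digits are pairwise independent and identically distributed, and the strong law of large
numbers applies to them. -/

section IndependentVariables

variable {Ω β : Type*} {mΩ : MeasurableSpace Ω} {mβ : MeasurableSpace β} {μ : Measure Ω}

lemma map_prodMk_eq_prod_of_singleton {ι : Type*} [Countable ι] [MeasurableSpace ι]
    [MeasurableSingletonClass ι] [IsFiniteMeasure μ] {ν : Measure β} [SigmaFinite ν]
    {X : Ω → ι} {Y : Ω → β} (hX : Measurable X) (hY : Measurable Y)
    (h : ∀ k t, MeasurableSet t → μ (X ⁻¹' {k} ∩ Y ⁻¹' t) = μ (X ⁻¹' {k}) * ν t) :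
    μ.map (fun ω ↦ (X ω, Y ω)) = (μ.map X).prod ν := by
  refine (Measure.prod_eq fun s t hs ht ↦ ?_).symm
  have map_restrict : (μ.restrict (Y ⁻¹' t)).map X = ν t • μ.map X := by
    refine Measure.ext_of_singleton fun k ↦ ?_
    have hk : MeasurableSet (X ⁻¹' {k}) := hX (measurableSet_singleton k)
    rw [Measure.smul_apply, Measure.map_apply hX (measurableSet_singleton k),
      Measure.map_apply hX (measurableSet_singleton k), Measure.restrict_apply hk, h k t ht,
      smul_eq_mul, mul_comm]
  calc μ.map (fun ω ↦ (X ω, Y ω)) (s ×ˢ t)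
      = μ (X ⁻¹' s ∩ Y ⁻¹' t) := Measure.map_apply (hX.prodMk hY) (hs.prod ht)
    _ = (μ.restrict (Y ⁻¹' t)).map X s := by
      rw [Measure.map_apply hX hs, Measure.restrict_apply (hX hs)]
    _ = μ.map X s * ν t := by rw [map_restrict, Measure.smul_apply, smul_eq_mul, mul_comm]

theorem ae_tendsto_card_filter_mem_div [IsFiniteMeasure μ] {X : ℕ → Ω → β}
    (hindep : Pairwise fun i j ↦ X i ⟂ᵢ[μ] X j) (hident : ∀ i, IdentDistrib (X i) (X 0) μ μ)
    {s : Set β} [DecidablePred (· ∈ s)] (hs : MeasurableSet s) :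
    ∀ᵐ ω ∂μ, Tendsto (fun n : ℕ ↦ (#{i ∈ range n | X i ω ∈ s} : ℝ) / n) atTop
      (nhds (μ.real (X 0 ⁻¹' s))) := by
  let f : β → ℝ := s.indicator 1
  have hf : Measurable f := measurable_one.indicator hs
  have hs₀ : NullMeasurableSet (X 0 ⁻¹' s) μ :=
    (hident 0).aemeasurable_fst.nullMeasurableSet_preimage hs
  have comp_eq : f ∘ X 0 = (X 0 ⁻¹' s).indicator 1 := rfl
  have integrable_comp : Integrable (f ∘ X 0) μ :=
    comp_eq ▸ (integrable_const (1 : ℝ)).indicator₀ hs₀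
  have integral_comp : μ[f ∘ X 0] = μ.real (X 0 ⁻¹' s) := by
    rw [comp_eq, integral_indicator₀ hs₀]
    simp
  filter_upwards [strong_law_ae_real (fun i ↦ f ∘ X i) integrable_comp
    (fun i j hij ↦ (hindep hij).comp hf hf) (fun i ↦ (hident i).comp hf)] with ω hω
  rw [integral_comp] at hω
  simpa [f, Set.indicator_apply] using hω

end IndependentVariables

section UniformDistribution

/-- The uniform distribution on `[0, 1)`, as a measure on `ℝ`. -/
noncomputable abbrev unitUniform : Measure ℝ := volume.restrict (Set.Ico 0 1)

instance : IsProbabilityMeasure unitUniform := ⟨by simp⟩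

lemma volume_floor_mul_eq_inter_fract_mul_mem {c : ℝ} (hc : 0 < c) (k : ℤ) {t : Set ℝ}
    (ht : MeasurableSet t) :
    volume ((fun x : ℝ ↦ ⌊c * x⌋) ⁻¹' {k} ∩ (fun x ↦ Int.fract (c * x)) ⁻¹' t) =
      ENNReal.ofReal c⁻¹ * unitUniform t := by
  have preimage_eq : (fun x : ℝ ↦ ⌊c * x⌋) ⁻¹' {k} ∩ (fun x ↦ Int.fract (c * x)) ⁻¹' t =
      (c * ·) ⁻¹' ((· - (k : ℝ)) ⁻¹' (t ∩ Set.Ico 0 1)) := by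
    ext x
    have floor_eq : ⌊c * x⌋ = k ↔ c * x - k ∈ Set.Ico (0 : ℝ) 1 := by
      rw [← Int.floor_eq_zero_iff, Int.floor_sub_intCast, sub_eq_zero]
    simp only [Set.mem_inter_iff, Set.mem_preimage, Set.mem_singleton_iff, ← floor_eq]
    rw [and_comm]
    exact and_congr_left fun hx ↦ by rw [Int.fract, hx]
  simp only [preimage_eq, Real.volume_preimage_mul_left hc.ne', abs_of_pos (inv_pos.2 hc),
    sub_eq_add_neg, measure_preimage_add_right, Measure.restrict_apply ht]

lemma unitUniform_floor_mul_eq_inter_fract_mul_mem {n : ℕ} (hn : n ≠ 0) (k : ℤ) {t : Set ℝ}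
    (ht : MeasurableSet t) :
    unitUniform ((fun x : ℝ ↦ ⌊n * x⌋) ⁻¹' {k} ∩ (fun x ↦ Int.fract (n * x)) ⁻¹' t) =
      if k / n = 0 then ENNReal.ofReal (n : ℝ)⁻¹ * unitUniform t else 0 := by
  have mem_Ico {x : ℝ} (hx : ⌊n * x⌋ = k) : x ∈ Set.Ico (0 : ℝ) 1 ↔ k / n = 0 := by
    rw [← hx, Int.natCast_mul_floor_div_cancel hn, Int.floor_eq_zero_iff]
  rw [Measure.restrict_apply' measurableSet_Ico]
  split_ifs with hk
  · rw [Set.inter_eq_left.2 fun x hx ↦ (mem_Ico hx.1).2 hk]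
    exact volume_floor_mul_eq_inter_fract_mul_mem (by positivity) k ht
  · rw [Set.disjoint_iff_inter_eq_empty.1 <|
      Set.disjoint_left.2 fun x hx hx' ↦ hk ((mem_Ico hx.1).1 hx'), measure_empty]

lemma unitUniform_floor_mul_eq {n k : ℕ} (hk : k < n) :
    unitUniform ((fun x : ℝ ↦ ⌊n * x⌋) ⁻¹' {(k : ℤ)}) = ENNReal.ofReal (n : ℝ)⁻¹ := by
  have hkn : (k : ℤ) / n = 0 := by exact_mod_cast Nat.div_eq_of_lt hk
  simpa [hkn] using
    unitUniform_floor_mul_eq_inter_fract_mul_mem (Nat.ne_zero_of_lt hk) k MeasurableSet.univ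

lemma map_floor_mul_fract_mul_unitUniform {n : ℕ} (hn : n ≠ 0) :
    unitUniform.map (fun x : ℝ ↦ (⌊n * x⌋, Int.fract (n * x))) =
      (unitUniform.map fun x : ℝ ↦ ⌊n * x⌋).prod unitUniform := by
  refine map_prodMk_eq_prod_of_singleton (by fun_prop) (by fun_prop) fun k t ht ↦ ?_
  have floor_law := unitUniform_floor_mul_eq_inter_fract_mul_mem hn k MeasurableSet.univ
  rw [Set.preimage_univ, Set.inter_univ, measure_univ, mul_one] at floor_law
  rw [unitUniform_floor_mul_eq_inter_fract_mul_mem hn k ht, floor_law, ite_zero_mul]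

lemma measurePreserving_fract_mul {n : ℕ} (hn : n ≠ 0) :
    MeasurePreserving (fun x : ℝ ↦ Int.fract (n * x)) unitUniform unitUniform := by
  have : IsProbabilityMeasure (unitUniform.map fun x : ℝ ↦ ⌊n * x⌋) :=
    Measure.isProbabilityMeasure_map (by fun_prop)
  refine ⟨by fun_prop, ?_⟩
  rw [← Measure.snd_map_prodMk (X := fun x : ℝ ↦ ⌊n * x⌋) (by fun_prop),
    map_floor_mul_fract_mul_unitUniform hn, Measure.snd_prod]

lemma indepFun_floor_mul_fract_mul {n : ℕ} (hn : n ≠ 0) :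
    (fun x : ℝ ↦ ⌊n * x⌋) ⟂ᵢ[unitUniform] (fun x ↦ Int.fract (n * x)) := by
  rw [indepFun_iff_map_prod_eq_prod_map_map (by fun_prop) (by fun_prop),
    (measurePreserving_fract_mul hn).map_eq, map_floor_mul_fract_mul_unitUniform hn]

end UniformDistribution

section Digits

variable {r : ℕ}

lemma measurable_digit (j : ℕ) : Measurable fun α ↦ digit r α j :=
  (measurable_of_countable (· % (r : ℤ))).comp (by fun_prop : Measurable fun α ↦ ⌊(r : ℝ) ^ j * α⌋)

lemma digit_succ (α : ℝ) (i : ℕ) : digit r α (i + 1) = digit r (Int.fract (r ^ i * α)) 1 := by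
  have split : (r : ℝ) ^ (i + 1) * α =
      r ^ 1 * Int.fract (r ^ i * α) + ((r * ⌊r ^ i * α⌋ : ℤ) : ℝ) := by
    push_cast
    rw [Int.fract]
    ring
  rw [digit, digit, split, Int.floor_add_intCast, Int.add_mul_emod_self_left]

lemma digit_eq_floor_div (hr : r ≠ 0) (α : ℝ) {j m : ℕ} (hjm : j ≤ m) :
    digit r α j = ⌊(r : ℝ) ^ m * α⌋ / (r : ℤ) ^ (m - j) % r := by
  have floor_eq := Int.natCast_mul_floor_div_cancel (pow_ne_zero (m - j) hr) ((r : ℝ) ^ j * α)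
  push_cast at floor_eq
  rw [digit, ← floor_eq, ← mul_assoc, pow_sub_mul_pow _ hjm]

lemma digit_one_of_mem_Ico (hr : 0 < r) {α : ℝ} (hα : α ∈ Set.Ico 0 1) :
    digit r α 1 = ⌊r * α⌋ := by
  rw [digit, pow_one]
  refine Int.emod_eq_of_lt (Int.floor_nonneg.2 (mul_nonneg r.cast_nonneg hα.1)) ?_
  rw [Int.floor_lt]
  exact_mod_cast mul_lt_of_lt_one_right (by positivity) hα.2

lemma indepFun_digit_of_lt (hr : r ≠ 0) {i j : ℕ} (hij : i < j) :
    (digit r · i) ⟂ᵢ[unitUniform] (digit r · j) := by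
  obtain ⟨m, rfl⟩ := Nat.exists_eq_succ_of_ne_zero (Nat.ne_zero_of_lt hij)
  convert! (indepFun_floor_mul_fract_mul (pow_ne_zero m hr)).comp
    (measurable_of_countable fun k : ℤ ↦ k / (r : ℤ) ^ (m - i) % r) (measurable_digit (r := r) 1)
    using 1
  · ext α
    simp [digit_eq_floor_div hr α (Nat.le_of_lt_succ hij)]
  · ext α
    simp [digit_succ]

lemma pairwise_indepFun_digit (hr : r ≠ 0) :
    Pairwise fun i j ↦ (digit r · i) ⟂ᵢ[unitUniform] (digit r · j) := by
  have : Std.Symm fun i j ↦ (digit r · i) ⟂ᵢ[unitUniform] (digit r · j) := ⟨fun _ _ h ↦ h.symm⟩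
  exact Pairwise.of_lt fun _ _ hij ↦ indepFun_digit_of_lt hr hij

lemma identDistrib_digit (hr : r ≠ 0) (i : ℕ) :
    IdentDistrib (digit r · (i + 1)) (digit r · 1) unitUniform unitUniform := by
  have fract_law : IdentDistrib (fun α : ℝ ↦ Int.fract ((r ^ i : ℕ) * α)) id
      unitUniform unitUniform :=
    ⟨by fun_prop, aemeasurable_id,
      by rw [(measurePreserving_fract_mul (pow_ne_zero i hr)).map_eq, Measure.map_id]⟩
  convert! fract_law.comp (measurable_digit (r := r) 1) using 1
  ext α
  simp [digit_succ]

lemma unitUniform_real_digit_one_eq {b : ℕ} (hb : b < r) :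
    unitUniform.real ((digit r · 1) ⁻¹' {(b : ℤ)}) = 1 / r := by
  have ae_eq_floor : (digit r · 1) ⁻¹' {(b : ℤ)} =ᵐ[unitUniform]
      (fun α : ℝ ↦ ⌊r * α⌋) ⁻¹' {(b : ℤ)} := by
    filter_upwards [ae_restrict_mem measurableSet_Ico] with α hα
    exact congrArg (· = (b : ℤ)) (digit_one_of_mem_Ico (Nat.zero_lt_of_lt hb) hα)
  rw [measureReal_congr ae_eq_floor, measureReal_def, unitUniform_floor_mul_eq hb,
    ENNReal.toReal_ofReal (by positivity), one_div]

lemma digitCount_eq_card_filter_range (b n : ℕ) (α : ℝ) :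
    digitCount r b n α = #{i ∈ range n | digit r α (i + 1) = b} := by
  have Icc_eq : Icc 1 n = Ico (0 + 1) (n + 1) := rfl
  rw [digitCount, Icc_eq, card_filter, card_filter, range_eq_Ico,
    sum_Ico_add' (fun j ↦ if digit r α j = b then 1 else 0)]

end Digits

/-- The set of numbers in `Set.Ico 0 1` for which the frequency of the digit `b` does
not converge to `1 / r` is a null set. -/
theorem measure_not_tendsto (r : ℕ) (hr : 2 ≤ r) (b : ℕ) (hb : b < r) :
    volume {α : ℝ | α ∈ Set.Ico (0 : ℝ) 1 ∧
        ¬ Tendsto (fun n : ℕ => (digitCount r b n α : ℝ) / n) atTop (nhds (1 / r))} = 0 := by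
  have hr₀ : r ≠ 0 := by omega
  have frequency := ae_tendsto_card_filter_mem_div
    ((pairwise_indepFun_digit hr₀).comp_of_injective (add_left_injective 1))
    (identDistrib_digit hr₀) (measurableSet_singleton (b : ℤ))
  rw [zero_add, unitUniform_real_digit_one_eq hb, ae_restrict_iff' measurableSet_Ico,
    ae_iff] at frequency
  simpa [digitCount_eq_card_filter_range, and_assoc] using frequency
end
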